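/- arXiv:2312.11951 — 5 statements merged into one kernel-verified Lean document; each statement's English description precedes it below -/
import Mathlib

section
/- If T ∈ A_{2p} is a CNAT of size 2p all of whose leaves are short, then every internal dot of T has either two internal dots as children or two leaves as children; consequently T has exactly p internal dots whose two children are both leaves. -/
/-!
Formalization of complete non-ambiguous trees (CNATs).

A CNAT of size `n` is modelled as a Boolean filling `D : Fin n → Fin n → Bool`
of the `n × n` grid (`D i j = true` meaning that cell in row `i`, column `j`
is dotted; rows are numbered from the top, columns from the left, `0`-based),
satisfying the root, non-ambiguity, minimality and completeness conditions.
-/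

namespace CNATf

/-- A filling of the `n × n` grid. -/
abbrev Grid (n : ℕ) := Fin n → Fin n → Bool

/-- Cell `(i, j)` is dotted. -/
def Dotted {n : ℕ} (D : Grid n) (i j : Fin n) : Prop := D i j = true

/-- There is a dotted cell above `(i, j)` in the same column. -/
def HasDotAbove {n : ℕ} (D : Grid n) (i j : Fin n) : Prop :=
  ∃ i' : Fin n, i' < i ∧ Dotted D i' j

/-- There is a dotted cell to the left of `(i, j)` in the same row. -/
def HasDotLeft {n : ℕ} (D : Grid n) (i j : Fin n) : Prop :=
  ∃ j' : Fin n, j' < j ∧ Dotted D i j'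

/-- There is a dotted cell below `(i, j)` in the same column. -/
def HasDotBelow {n : ℕ} (D : Grid n) (i j : Fin n) : Prop :=
  ∃ i' : Fin n, i < i' ∧ Dotted D i' j

/-- There is a dotted cell to the right of `(i, j)` in the same row. -/
def HasDotRight {n : ℕ} (D : Grid n) (i j : Fin n) : Prop :=
  ∃ j' : Fin n, j < j' ∧ Dotted D i j'

/-- `D` is a complete non-ambiguous tree (CNAT) on the `n × n` grid:
root, non-ambiguity, minimality (rows and columns), completeness. -/
def IsCNAT {n : ℕ} (D : Grid n) : Prop :=
  (∀ i j : Fin n, (i : ℕ) = 0 → (j : ℕ) = 0 → Dotted D i j) ∧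
  (∀ i j : Fin n, Dotted D i j → ¬((i : ℕ) = 0 ∧ (j : ℕ) = 0) →
      Xor' (HasDotAbove D i j) (HasDotLeft D i j)) ∧
  (∀ i : Fin n, ∃ j : Fin n, Dotted D i j) ∧
  (∀ j : Fin n, ∃ i : Fin n, Dotted D i j) ∧
  (∀ i j : Fin n, Dotted D i j →
      (HasDotBelow D i j ∧ HasDotRight D i j) ∨ (¬HasDotBelow D i j ∧ ¬HasDotRight D i j))

/-- A leaf: a dotted cell with no dot below it in its column and no dot
to its right in its row. -/
def IsLeaf {n : ℕ} (D : Grid n) (i j : Fin n) : Prop :=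
  Dotted D i j ∧ ¬HasDotBelow D i j ∧ ¬HasDotRight D i j

/-- An internal dot: a dotted cell with both a dot below it in its column and
a dot to its right in its row. -/
def IsInternal {n : ℕ} (D : Grid n) (i j : Fin n) : Prop :=
  Dotted D i j ∧ HasDotBelow D i j ∧ HasDotRight D i j

/-- `p` is the nearest dotted cell above `l` in the column of `l`. -/
def ParentAbove {n : ℕ} (D : Grid n) (p l : Fin n × Fin n) : Prop :=
  p.2 = l.2 ∧ p.1 < l.1 ∧ Dotted D p.1 p.2 ∧
    ∀ k : Fin n, p.1 < k → k < l.1 → ¬Dotted D k l.2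

/-- `p` is the nearest dotted cell to the left of `l` in the row of `l`,
and there is no dotted cell above `l` in its column. -/
def ParentLeft {n : ℕ} (D : Grid n) (p l : Fin n × Fin n) : Prop :=
  p.1 = l.1 ∧ p.2 < l.2 ∧ Dotted D p.1 p.2 ∧
    (∀ k : Fin n, p.2 < k → k < l.2 → ¬Dotted D l.1 k) ∧
    ¬HasDotAbove D l.1 l.2

/-- `p` is the parent of the dot `l`: the nearest dotted cell above `l` in its
column if such a cell exists, otherwise the nearest dotted cell to its left. -/
def IsParent {n : ℕ} (D : Grid n) (p l : Fin n × Fin n) : Prop :=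
  ParentAbove D p l ∨ ParentLeft D p l

/-- `c` is the left child of the internal dot `p`: the nearest dot below `p`
in the column of `p`. -/
def IsLeftChild {n : ℕ} (D : Grid n) (p c : Fin n × Fin n) : Prop :=
  c.2 = p.2 ∧ p.1 < c.1 ∧ Dotted D c.1 c.2 ∧
    ∀ k : Fin n, p.1 < k → k < c.1 → ¬Dotted D k p.2

/-- `c` is the right child of the internal dot `p`: the nearest dot to the
right of `p` in the row of `p`. -/
def IsRightChild {n : ℕ} (D : Grid n) (p c : Fin n × Fin n) : Prop :=
  c.1 = p.1 ∧ p.2 < c.2 ∧ Dotted D c.1 c.2 ∧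
    ∀ k : Fin n, p.2 < k → k < c.2 → ¬Dotted D p.1 k

/-- A left leaf: a leaf whose parent is above it in its column. -/
def IsLeftLeaf {n : ℕ} (D : Grid n) (l : Fin n × Fin n) : Prop :=
  IsLeaf D l.1 l.2 ∧ ∃ p : Fin n × Fin n, ParentAbove D p l

/-- A right leaf: a leaf whose parent is to its left in its row. -/
def IsRightLeaf {n : ℕ} (D : Grid n) (l : Fin n × Fin n) : Prop :=
  IsLeaf D l.1 l.2 ∧ ∃ p : Fin n × Fin n, ParentLeft D p l

/-- A short leaf: a leaf whose parent lies in a cell adjacent to it. -/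
def IsShortLeaf {n : ℕ} (D : Grid n) (l : Fin n × Fin n) : Prop :=
  IsLeaf D l.1 l.2 ∧ ∃ p : Fin n × Fin n, IsParent D p l ∧
    (((p.1 : ℕ) + 1 = (l.1 : ℕ) ∧ p.2 = l.2) ∨ ((p.2 : ℕ) + 1 = (l.2 : ℕ) ∧ p.1 = l.1))

/-- A long leaf: a leaf which is not short. -/
def IsLongLeaf {n : ℕ} (D : Grid n) (l : Fin n × Fin n) : Prop :=
  IsLeaf D l.1 l.2 ∧ ¬IsShortLeaf D l

/-- All leaves of `D` are short (i.e. `D ∈ 𝒜ₙ`). -/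
def AllLeavesShort {n : ℕ} (D : Grid n) : Prop :=
  ∀ l : Fin n × Fin n, IsLeaf D l.1 l.2 → IsShortLeaf D l

/-- `π` is the permutation associated with the CNAT `D`: for every row `i`,
the leaf of row `i` lies in column `π i`. -/
def IsAssocPerm {n : ℕ} (D : Grid n) (π : Equiv.Perm (Fin n)) : Prop :=
  ∀ i : Fin n, IsLeaf D i (π i)

/-- Two left leaves `l₁`, `l₂` (with respective parents `p₁`, `p₂`) are
interacting if `r(p₁) < r(l₂) < r(l₁)` or `r(p₂) < r(l₁) < r(l₂)`. -/
def InteractingLeft {n : ℕ} (D : Grid n) (l₁ l₂ : Fin n × Fin n) : Prop :=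
  IsLeftLeaf D l₁ ∧ IsLeftLeaf D l₂ ∧
    ∃ p₁ p₂ : Fin n × Fin n, ParentAbove D p₁ l₁ ∧ ParentAbove D p₂ l₂ ∧
      ((p₁.1 < l₂.1 ∧ l₂.1 < l₁.1) ∨ (p₂.1 < l₁.1 ∧ l₁.1 < l₂.1))

/-- Two right leaves `l₁`, `l₂` (with respective parents `p₁`, `p₂`) are
interacting if `c(p₁) < c(l₂) < c(l₁)` or `c(p₂) < c(l₁) < c(l₂)`. -/
def InteractingRight {n : ℕ} (D : Grid n) (l₁ l₂ : Fin n × Fin n) : Prop :=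
  IsRightLeaf D l₁ ∧ IsRightLeaf D l₂ ∧
    ∃ p₁ p₂ : Fin n × Fin n, ParentLeft D p₁ l₁ ∧ ParentLeft D p₂ l₂ ∧
      ((p₁.2 < l₂.2 ∧ l₂.2 < l₁.2) ∨ (p₂.2 < l₁.2 ∧ l₁.2 < l₂.2))

/-- Two leaves are interacting (as left leaves or as right leaves). -/
def Interacting {n : ℕ} (D : Grid n) (l₁ l₂ : Fin n × Fin n) : Prop :=
  InteractingLeft D l₁ l₂ ∨ InteractingRight D l₁ l₂

/-- The switch `S(T, l₁, l₂)` of two interacting leaves: `l₁` and `l₂` are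
erased and replaced by dots at `(r(l₂), c(l₁))` and `(r(l₁), c(l₂))`
(for left leaves this exchanges their row labels, for right leaves this
exchanges their column labels; both descriptions yield the same filling). -/
def switchLeaves {n : ℕ} (D : Grid n) (l₁ l₂ : Fin n × Fin n) : Grid n := fun i j =>
  if (i = l₂.1 ∧ j = l₁.2) ∨ (i = l₁.1 ∧ j = l₂.2) then true
  else if (i = l₁.1 ∧ j = l₁.2) ∨ (i = l₂.1 ∧ j = l₂.2) then false
  else D i j



/-- Leaf predicate on `ℕ`-coordinates. -/
def NLeaf (E : ℕ → ℕ → Prop) (i j : ℕ) : Prop :=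
  E i j ∧ (∀ i', i < i' → ¬ E i' j) ∧ (∀ j', j < j' → ¬ E i j')

/-- Abstract properties of a CNAT with short leaves, symmetric under transposition. -/
structure Good (n : ℕ) (E : ℕ → ℕ → Prop) : Prop where
  bd : ∀ i j, E i j → i < n ∧ j < n
  na : ∀ i j i' j', E i j → E i' j → i' < i → E i j' → j' < j → False
  compl : ∀ i j, E i j → ((∃ i', i < i' ∧ E i' j) ↔ (∃ j', j < j' ∧ E i j'))
  short : ∀ i j, NLeaf E i j → (∃ a, i = a + 1 ∧ E a j) ∨ (∃ b, j = b + 1 ∧ E i b)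

theorem NLeaf.swap {E : ℕ → ℕ → Prop} {i j : ℕ} (h : NLeaf E i j) :
    NLeaf (fun a b => E b a) j i := ⟨h.1, h.2.2, h.2.1⟩

theorem Good.swap {n : ℕ} {E : ℕ → ℕ → Prop} (h : Good n E) : Good n (fun a b => E b a) where
  bd i j e := (h.bd j i e).symm
  na i j i' j' e e1 h1 e2 h2 := h.na j i j' i' e e2 h2 e1 h1
  compl i j e := (h.compl j i e).symm
  short i j l := (h.short j i (NLeaf.swap l)).symm

theorem Good.rowLeaf {n : ℕ} {E : ℕ → ℕ → Prop} (h : Good n E) :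
    ∀ t i j, n - j = t → E i j → ∃ k, j ≤ k ∧ NLeaf E i k := by
  intro t
  induction t using Nat.strong_induction_on with
  | _ t ih =>
    intro i j ht e
    by_cases hr : ∃ j', j < j' ∧ E i j'
    · obtain ⟨j', hj, e'⟩ := hr
      have h1 := h.bd _ _ e
      have h2 := h.bd _ _ e'
      obtain ⟨k, hk, hl⟩ := ih (n - j') (by omega) i j' rfl e'
      exact ⟨k, by omega, hl⟩
    · have hb := mt (h.compl i j e).1 hr
      push Not at hr hb
      exact ⟨j, le_rfl, e, hb, hr⟩

theorem Good.colLeaf {n : ℕ} {E : ℕ → ℕ → Prop} (h : Good n E) (i j : ℕ) (e : E i j) :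
    ∃ k, i ≤ k ∧ NLeaf E k j := by
  obtain ⟨k, hk, hl⟩ := h.swap.rowLeaf _ j i rfl e
  exact ⟨k, hk, hl.swap⟩

/-- Key lemma: an adjacent left leaf forces an adjacent right leaf. -/
theorem Good.key {n : ℕ} {E : ℕ → ℕ → Prop} (h : Good n E) :
    ∀ t i j, n - j = t → E i j → NLeaf E (i + 1) j → NLeaf E i (j + 1) := by
  intro t
  induction t using Nat.strong_induction_on with
  | _ t ih =>
    intro i j ht e hl
    obtain ⟨k, hk, hkl⟩ := h.rowLeaf _ i j rfl e
    have hkj : k ≠ j := by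
      rintro rfl
      exact hkl.2.1 (i + 1) (by omega) hl.1
    rcases h.short i k hkl with ⟨a, rfl, ea⟩ | ⟨j0, rfl, e0⟩
    · exact (h.na (a + 1) k a j hkl.1 ea (by omega) e (by omega)).elim
    by_cases hj : j0 = j
    · subst hj; exact hkl
    exfalso
    obtain ⟨m, hm, hml⟩ := h.colLeaf i j0 e0
    have hmi : m ≠ i := by
      rintro rfl
      exact hml.2.2 (j0 + 1) (by omega) hkl.1
    rcases h.short m j0 hml with ⟨m0, rfl, em⟩ | ⟨b, rfl, eb⟩
    · have hm0 : m0 ≠ i := by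
        rintro rfl
        exact hl.2.2 j0 (by omega) hml.1
      have hb := h.bd _ _ e0
      have := ih (n - j0) (by omega) m0 j0 rfl em hml
      exact hkl.2.1 m0 (by omega) this.1
    · exact h.na m (b + 1) i b hml.1 e0 (by omega) eb (by omega)

theorem Good.key1 {n : ℕ} {E : ℕ → ℕ → Prop} (h : Good n E) {i j : ℕ} (e : E i j)
    (hl : NLeaf E (i + 1) j) : NLeaf E i (j + 1) := h.key _ i j rfl e hl

theorem Good.key2 {n : ℕ} {E : ℕ → ℕ → Prop} (h : Good n E) {i j : ℕ} (e : E i j)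
    (hl : NLeaf E i (j + 1)) : NLeaf E (i + 1) j :=
  (h.swap.key _ j i rfl e hl.swap).swap

/-- The dots of `D` in `ℕ`-coordinates. -/
def NE {n : ℕ} (D : Grid n) (i j : ℕ) : Prop :=
  ∃ (hi : i < n) (hj : j < n), Dotted D ⟨i, hi⟩ ⟨j, hj⟩

theorem ne_coe {n : ℕ} (D : Grid n) (i j : Fin n) : NE D i j ↔ Dotted D i j :=
  ⟨fun ⟨_, _, h⟩ => h, fun h => ⟨i.2, j.2, h⟩⟩

theorem nleaf_coe {n : ℕ} (D : Grid n) (i j : Fin n) : NLeaf (NE D) i j ↔ IsLeaf D i j := by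
  constructor
  · rintro ⟨h1, h2, h3⟩
    refine ⟨(ne_coe D i j).1 h1, ?_, ?_⟩
    · rintro ⟨k, hk, e⟩
      exact h2 k hk ((ne_coe D _ _).2 e)
    · rintro ⟨k, hk, e⟩
      exact h3 k hk ((ne_coe D _ _).2 e)
  · rintro ⟨h1, h2, h3⟩
    refine ⟨(ne_coe D i j).2 h1, ?_, ?_⟩
    · rintro k hk ⟨a, b, e⟩
      exact h2 ⟨⟨k, a⟩, hk, e⟩
    · rintro k hk ⟨a, b, e⟩
      exact h3 ⟨⟨k, b⟩, hk, e⟩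

theorem good_of {n : ℕ} (D : Grid n) (hD : IsCNAT D) (hs : AllLeavesShort D) :
    Good n (NE D) where
  bd i j e := ⟨e.1, e.2.1⟩
  na := by
    rintro i j i' j' ⟨hi, hj, e⟩ ⟨hi', _, e1⟩ h1 ⟨_, hj', e2⟩ h2
    have := hD.2.1 ⟨i, hi⟩ ⟨j, hj⟩ e (by simp; omega)
    have a : HasDotAbove D ⟨i, hi⟩ ⟨j, hj⟩ := ⟨⟨i', hi'⟩, h1, e1⟩
    have b : HasDotLeft D ⟨i, hi⟩ ⟨j, hj⟩ := ⟨⟨j', hj'⟩, h2, e2⟩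
    rcases this with h | h
    · exact h.2 b
    · exact h.2 a
  compl := by
    rintro i j ⟨hi, hj, e⟩
    have a : (∃ i', i < i' ∧ NE D i' j) ↔ HasDotBelow D ⟨i, hi⟩ ⟨j, hj⟩ :=
      ⟨fun ⟨k, hk, x, _, y⟩ => ⟨⟨k, x⟩, hk, y⟩, fun ⟨k, hk, y⟩ => ⟨k, hk, k.2, hj, y⟩⟩
    have b : (∃ j', j < j' ∧ NE D i j') ↔ HasDotRight D ⟨i, hi⟩ ⟨j, hj⟩ :=
      ⟨fun ⟨k, hk, _, x, y⟩ => ⟨⟨k, x⟩, hk, y⟩, fun ⟨k, hk, y⟩ => ⟨k, hk, hi, k.2, y⟩⟩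
    rw [a, b]
    have := hD.2.2.2.2 _ _ e
    tauto
  short := by
    intro i j hl
    obtain ⟨hi, hj, e⟩ := hl.1
    obtain ⟨-, q, hq, ha⟩ := hs (⟨i, hi⟩, ⟨j, hj⟩) ((nleaf_coe D ⟨i, hi⟩ ⟨j, hj⟩).1 hl)
    have hqd : Dotted D q.1 q.2 := by
      rcases hq with h | h
      · exact h.2.2.1
      · exact h.2.2.1
    rcases ha with ⟨h1, h2⟩ | ⟨h1, h2⟩
    · refine Or.inl ⟨q.1, h1.symm, ?_⟩
      rw [h2] at hqd
      exact ⟨_, hj, hqd⟩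
    · refine Or.inr ⟨q.2, h1.symm, ?_⟩
      rw [h2] at hqd
      exact ⟨hi, _, hqd⟩

/-- Internal dots with two leaf children, in `ℕ`-coordinates. -/
def Cherry (E : ℕ → ℕ → Prop) (i j : ℕ) : Prop :=
  E i j ∧ NLeaf E (i + 1) j ∧ NLeaf E i (j + 1)

theorem left_adj {n : ℕ} {D : Grid n} (g : Good n (NE D)) {d c : Fin n × Fin n}
    (hd : Dotted D d.1 d.2) (hc : IsLeftChild D d c) (hl : IsLeaf D c.1 c.2) :
    NLeaf (NE D) (d.1 + 1) d.2 := by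
  obtain ⟨h1, h2, h3, h4⟩ := hc
  have hl' := (nleaf_coe D _ _).2 hl
  rw [h1] at hl'
  have h2' : (d.1 : ℕ) < c.1 := h2
  rcases g.short _ _ hl' with ⟨a, ha, ea⟩ | ⟨b, hb, eb⟩
  · obtain ⟨x, y, ea'⟩ := ea
    by_cases hh : (d.1 : ℕ) < a
    · exact (h4 ⟨a, x⟩ hh (by change a < (c.1 : ℕ); omega) ea').elim
    · have : (c.1 : ℕ) = d.1 + 1 := by omega
      rwa [this] at hl'
  · exact (g.na _ _ _ b hl'.1 ((ne_coe D _ _).2 hd) h2' eb (by omega)).elim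

theorem right_adj {n : ℕ} {D : Grid n} (g : Good n (NE D)) {d c : Fin n × Fin n}
    (hd : Dotted D d.1 d.2) (hc : IsRightChild D d c) (hl : IsLeaf D c.1 c.2) :
    NLeaf (NE D) d.1 (d.2 + 1) := by
  obtain ⟨h1, h2, h3, h4⟩ := hc
  have hl' := (nleaf_coe D _ _).2 hl
  rw [h1] at hl'
  have h2' : (d.2 : ℕ) < c.2 := h2
  rcases g.short _ _ hl' with ⟨b, hb, eb⟩ | ⟨a, ha, ea⟩
  · exact (g.na _ _ b _ hl'.1 eb (by omega) ((ne_coe D _ _).2 hd) h2').elim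
  · obtain ⟨x, y, ea'⟩ := ea
    by_cases hh : (d.2 : ℕ) < a
    · exact (h4 ⟨a, y⟩ hh (by change a < (c.2 : ℕ); omega) ea').elim
    · have : (c.2 : ℕ) = d.2 + 1 := by omega
      rwa [this] at hl'

theorem left_leaf {n : ℕ} {D : Grid n} {d c : Fin n × Fin n}
    (hc : IsLeftChild D d c) (hl : NLeaf (NE D) (d.1 + 1) d.2) : IsLeaf D c.1 c.2 := by
  obtain ⟨h1, h2, h3, h4⟩ := hc
  have h2' : (d.1 : ℕ) < c.1 := h2
  rw [h1] at h3
  by_cases hh : (d.1 : ℕ) + 1 < c.1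
  · exact (hl.2.1 _ hh ((ne_coe D _ _).2 h3)).elim
  · have : (d.1 : ℕ) + 1 = c.1 := by omega
    rw [this, ← h1] at hl
    exact (nleaf_coe D _ _).1 hl

theorem right_leaf {n : ℕ} {D : Grid n} {d c : Fin n × Fin n}
    (hc : IsRightChild D d c) (hl : NLeaf (NE D) d.1 (d.2 + 1)) : IsLeaf D c.1 c.2 := by
  obtain ⟨h1, h2, h3, h4⟩ := hc
  have h2' : (d.2 : ℕ) < c.2 := h2
  rw [h1] at h3
  by_cases hh : (d.2 : ℕ) + 1 < c.2
  · exact (hl.2.2 _ hh ((ne_coe D _ _).2 h3)).elim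
  · have : (d.2 : ℕ) + 1 = c.2 := by omega
    rw [this, ← h1] at hl
    exact (nleaf_coe D _ _).1 hl

theorem cherry_iff {n : ℕ} {D : Grid n} (g : Good n (NE D)) (d : Fin n × Fin n) :
    (IsInternal D d.1 d.2 ∧ ∃ c₁ c₂ : Fin n × Fin n, IsLeftChild D d c₁ ∧ IsRightChild D d c₂ ∧
          IsLeaf D c₁.1 c₁.2 ∧ IsLeaf D c₂.1 c₂.2) ↔ Cherry (NE D) d.1 d.2 := by
  constructor
  · rintro ⟨hi, c₁, c₂, h1, h2, h3, h4⟩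
    exact ⟨(ne_coe D _ _).2 hi.1, left_adj g hi.1 h1 h3, right_adj g hi.1 h2 h4⟩
  · rintro ⟨he, h1, h2⟩
    obtain ⟨a, b, e1⟩ := h1.1
    obtain ⟨a', b', e2⟩ := h2.1
    have hd := (ne_coe D _ _).1 he
    have hlt1 : d.1 < ⟨d.1 + 1, a⟩ := by change (d.1 : ℕ) < d.1 + 1; omega
    have hlt2 : d.2 < ⟨d.2 + 1, b'⟩ := by change (d.2 : ℕ) < d.2 + 1; omega
    refine ⟨⟨hd, ⟨_, hlt1, e1⟩, ⟨_, hlt2, e2⟩⟩,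
      (⟨d.1 + 1, a⟩, d.2), (d.1, ⟨d.2 + 1, b'⟩), ⟨rfl, hlt1, e1, ?_⟩, ⟨rfl, hlt2, e2, ?_⟩,
      (nleaf_coe D ⟨d.1 + 1, a⟩ d.2).1 h1, (nleaf_coe D d.1 ⟨d.2 + 1, b'⟩).1 h2⟩
    · intro k hk hk2
      change (d.1 : ℕ) < k at hk
      change (k : ℕ) < d.1 + 1 at hk2
      omega
    · intro k hk hk2
      change (d.2 : ℕ) < k at hk
      change (k : ℕ) < d.2 + 1 at hk2
      omega

theorem NLeaf.row_unique {E : ℕ → ℕ → Prop} {i j k : ℕ} (h : NLeaf E i j) (h' : NLeaf E i k) :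
    j = k := by
  rcases lt_trichotomy j k with hh | hh | hh
  · exact (h.2.2 _ hh h'.1).elim
  · exact hh
  · exact (h'.2.2 _ hh h.1).elim

theorem cherry_card {n : ℕ} {D : Grid n} (g : Good n (NE D))
    (hrow : ∀ i : Fin n, ∃ j : Fin n, Dotted D i j) :
    2 * Nat.card {d : Fin n × Fin n // Cherry (NE D) d.1 d.2} = n := by
  classical
  let X := {d : Fin n × Fin n // Cherry (NE D) d.1 d.2}
  let f : X ⊕ X → Fin n := fun s => match s with
    | .inl d => d.1.1
    | .inr d => ⟨d.1.1 + 1, (g.bd _ _ d.2.2.1.1).1⟩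
  have mixed : ∀ d d' : X, (d.1.1 : ℕ) = d'.1.1 + 1 → False := by
    intro d d' h
    have h1 := d.2.2.2
    have h2 := d'.2.2.1
    rw [← h] at h2
    have hj := h1.row_unique h2
    refine g.na _ _ d'.1.1 d.1.2 h2.1 d'.2.1 (by omega) d.2.1 (by omega)
  have hf : Function.Bijective f := by
    constructor
    · rintro (d | d) (d' | d') hh
      · have hh : d.1.1 = d'.1.1 := hh
        have h1 := d.2.2.2
        have h2 := d'.2.2.2
        rw [← hh] at h2
        have := h1.row_unique h2
        congr 1
        exact Subtype.ext (Prod.ext hh (Fin.ext (by omega)))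
      · exact (mixed d d' (congrArg Fin.val hh)).elim
      · exact (mixed d' d (congrArg Fin.val hh).symm).elim
      · have hh : (d.1.1 : ℕ) + 1 = d'.1.1 + 1 := congrArg Fin.val hh
        have h1 := d.2.2.1
        have h2 := d'.2.2.1
        rw [← hh] at h2
        have := h1.row_unique h2
        congr 1
        exact Subtype.ext (Prod.ext (Fin.ext (by omega)) (Fin.ext (by omega)))
    · intro i
      obtain ⟨j, e⟩ := hrow i
      obtain ⟨k, hk, hl⟩ := g.rowLeaf _ i j rfl ((ne_coe D _ _).2 e)
      rcases g.short _ _ hl with ⟨a, ha, ea⟩ | ⟨b, rfl, eb⟩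
      · have hb := g.bd _ _ ea
        rw [ha] at hl
        exact ⟨.inr ⟨(⟨a, hb.1⟩, ⟨k, hb.2⟩), ea, hl, g.key1 ea hl⟩, Fin.ext ha.symm⟩
      · have hb := g.bd _ _ eb
        exact ⟨.inl ⟨(i, ⟨b, hb.2⟩), eb, g.key2 eb hl, hl⟩, rfl⟩
  have := Nat.card_eq_of_bijective f hf
  rw [Nat.card_sum, Nat.card_fin] at this
  change 2 * Nat.card X = n
  omega

/-- If `T ∈ 𝒜₂ₚ` is a CNAT of size `2p` all of whose leaves
are short, then every internal dot of `T` has either two internal dots as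
children or two leaves as children; consequently `T` has exactly `p` internal
dots whose two children are both leaves. -/
theorem cnat_all_short_children (p : ℕ) (hp : 1 ≤ p) (D : Grid (2 * p))
    (hD : IsCNAT D) (hshort : AllLeavesShort D) :
    (∀ d c₁ c₂ : Fin (2 * p) × Fin (2 * p), IsInternal D d.1 d.2 →
        IsLeftChild D d c₁ → IsRightChild D d c₂ →
        (IsInternal D c₁.1 c₁.2 ∧ IsInternal D c₂.1 c₂.2) ∨
        (IsLeaf D c₁.1 c₁.2 ∧ IsLeaf D c₂.1 c₂.2)) ∧
    Nat.card {d : Fin (2 * p) × Fin (2 * p) // IsInternal D d.1 d.2 ∧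
        ∃ c₁ c₂ : Fin (2 * p) × Fin (2 * p), IsLeftChild D d c₁ ∧ IsRightChild D d c₂ ∧
          IsLeaf D c₁.1 c₁.2 ∧ IsLeaf D c₂.1 c₂.2} = p := by
  have g := good_of D hD hshort
  refine ⟨?_, ?_⟩
  · intro d c₁ c₂ hd h1 h2
    have hE := (ne_coe D _ _).2 hd.1
    have dich : ∀ i j, Dotted D i j → ¬ IsLeaf D i j → IsInternal D i j := by
      intro i j e hn
      rcases hD.2.2.2.2 i j e with h | h
      · exact ⟨e, h⟩
      · exact (hn ⟨e, h⟩).elim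
    by_cases hl : IsLeaf D c₁.1 c₁.2
    · exact Or.inr ⟨hl, right_leaf h2 (g.key1 hE (left_adj g hd.1 h1 hl))⟩
    · by_cases hr : IsLeaf D c₂.1 c₂.2
      · exact Or.inr ⟨left_leaf h1 (g.key2 hE (right_adj g hd.1 h2 hr)), hr⟩
      · exact Or.inl ⟨dich _ _ h1.2.2.1 hl, dich _ _ h2.2.2.1 hr⟩
  · have := cherry_card g hD.2.2.1
    rw [Nat.card_congr (Equiv.subtypeEquivRight (cherry_iff g))]
    omega

end CNATf
end

section
/- Let T be a CNAT of size n and let l_1 and l_2 be two interacting leaves of T. Then the filling S(T,l_1,l_2) obtained by switching l_1 and l_2 (exchanging their row labels if they are left leaves, or their column labels if they are right leaves) is again a CNAT of size n. -/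
/-!
Formalization of complete non-ambiguous trees (CNATs).

A CNAT of size `n` is modelled as a Boolean filling `D : Fin n → Fin n → Bool`
of the `n × n` grid (`D i j = true` meaning that cell in row `i`, column `j`
is dotted; rows are numbered from the top, columns from the left, `0`-based),
satisfying the root, non-ambiguity, minimality and completeness conditions.
-/

namespace CNATf

/-- Swapping two left leaves both of whose parents lie above both leaves. -/
theorem core {n : ℕ} (D : Grid n) (hD : IsCNAT D) (r₁ c₁ r₂ c₂ q₁ q₂ : Fin n)
    (h1 : IsLeaf D r₁ c₁) (h2 : IsLeaf D r₂ c₂) (hne : r₁ ≠ r₂)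
    (d1 : Dotted D q₁ c₁) (d2 : Dotted D q₂ c₂)
    (h11 : q₁ < r₁) (h12 : q₁ < r₂) (h21 : q₂ < r₁) (h22 : q₂ < r₂)
    (g1 : ∀ k, q₁ < k → k < r₁ → ¬ Dotted D k c₁)
    (g2 : ∀ k, q₂ < k → k < r₂ → ¬ Dotted D k c₂) :
    IsCNAT (switchLeaves D (r₁, c₁) (r₂, c₂)) := by
  obtain ⟨hroot, hna, hrow, hcol, hcomp⟩ := hD
  obtain ⟨l1, b1, t1⟩ := h1
  obtain ⟨l2, b2, t2⟩ := h2
  have n1 : ¬ HasDotLeft D r₁ c₁ := by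
    have := hna r₁ c₁ l1 (by rintro ⟨h, -⟩; have : (q₁ : ℕ) < r₁ := h11; omega)
    rcases this with h | h
    · exact h.2
    · exact absurd ⟨q₁, h11, d1⟩ h.2
  have n2 : ¬ HasDotLeft D r₂ c₂ := by
    have := hna r₂ c₂ l2 (by rintro ⟨h, -⟩; have : (q₂ : ℕ) < r₂ := h22; omega)
    rcases this with h | h
    · exact h.2
    · exact absurd ⟨q₂, h22, d2⟩ h.2
  have R1 : ∀ j, Dotted D r₁ j → j = c₁ := by
    intro j hj
    rcases lt_trichotomy j c₁ with h | h | h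
    · exact absurd ⟨j, h, hj⟩ n1
    · exact h
    · exact absurd ⟨j, h, hj⟩ t1
  have R2 : ∀ j, Dotted D r₂ j → j = c₂ := by
    intro j hj
    rcases lt_trichotomy j c₂ with h | h | h
    · exact absurd ⟨j, h, hj⟩ n2
    · exact h
    · exact absurd ⟨j, h, hj⟩ t2
  have C1 : ∀ i, Dotted D i c₁ → i ≤ q₁ ∨ i = r₁ := by
    intro i hi
    by_contra hc
    push Not at hc
    rcases lt_or_gt_of_ne hc.2 with h | h
    · exact g1 i hc.1 h hi
    · exact b1 ⟨i, h, hi⟩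
  have C2 : ∀ i, Dotted D i c₂ → i ≤ q₂ ∨ i = r₂ := by
    intro i hi
    by_contra hc
    push Not at hc
    rcases lt_or_gt_of_ne hc.2 with h | h
    · exact g2 i hc.1 h hi
    · exact b2 ⟨i, h, hi⟩
  have hc : c₁ ≠ c₂ := by
    rintro rfl
    rcases lt_or_gt_of_ne hne with h | h
    · exact b1 ⟨r₂, h, l2⟩
    · exact b2 ⟨r₁, h, l1⟩
  have E : ∀ i j, Dotted (switchLeaves D (r₁, c₁) (r₂, c₂)) i j ↔
      (i = r₂ ∧ j = c₁) ∨ (i = r₁ ∧ j = c₂) ∨ (i ≠ r₁ ∧ i ≠ r₂ ∧ Dotted D i j) := by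
    intro i j
    have a1 := R1 j
    have a2 := R2 j
    unfold Dotted switchLeaves at *
    grind
  generalize switchLeaves D (r₁, c₁) (r₂, c₂) = D' at E
  have q1n : q₁ ≠ r₁ ∧ q₁ ≠ r₂ := ⟨h11.ne, h12.ne⟩
  have q2n : q₂ ≠ r₁ ∧ q₂ ≠ r₂ := ⟨h21.ne, h22.ne⟩
  have e1 : Dotted D' q₁ c₁ := (E _ _).2 (Or.inr (Or.inr ⟨q1n.1, q1n.2, d1⟩))
  have e2 : Dotted D' q₂ c₂ := (E _ _).2 (Or.inr (Or.inr ⟨q2n.1, q2n.2, d2⟩))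
  have m1 : Dotted D' r₂ c₁ := (E _ _).2 (Or.inl ⟨rfl, rfl⟩)
  have m2 : Dotted D' r₁ c₂ := (E _ _).2 (Or.inr (Or.inl ⟨rfl, rfl⟩))
  -- rows other than the two swapped ones are unchanged
  have L : ∀ i j, i ≠ r₁ → i ≠ r₂ → (HasDotLeft D' i j ↔ HasDotLeft D i j) := by
    intro i j hi1 hi2
    simp only [HasDotLeft, E]; simp [hi1, hi2]
  have R : ∀ i j, i ≠ r₁ → i ≠ r₂ → (HasDotRight D' i j ↔ HasDotRight D i j) := by
    intro i j hi1 hi2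
    simp only [HasDotRight, E]; simp [hi1, hi2]
  have A : ∀ i j, i ≠ r₁ → i ≠ r₂ → Dotted D i j →
      (HasDotAbove D' i j ↔ HasDotAbove D i j) := by
    intro i j hi1 hi2 hd
    have a1 := C1 i
    have a2 := C2 i
    constructor
    · rintro ⟨k, hk, hk'⟩
      rcases (E _ _).1 hk' with ⟨rfl, rfl⟩ | ⟨rfl, rfl⟩ | ⟨-, -, h⟩
      · exfalso; grind
      · exfalso; grind
      · exact ⟨k, hk, h⟩
    · rintro ⟨k, hk, hk'⟩
      refine ⟨k, hk, (E _ _).2 (Or.inr (Or.inr ⟨?_, ?_, hk'⟩))⟩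
      · rintro rfl
        obtain rfl := R1 j hk'
        grind
      · rintro rfl
        obtain rfl := R2 j hk'
        grind
  have B : ∀ i j, i ≠ r₁ → i ≠ r₂ → Dotted D i j →
      (HasDotBelow D' i j ↔ HasDotBelow D i j) := by
    intro i j hi1 hi2 hd
    have a1 := C1 i
    have a2 := C2 i
    constructor
    · rintro ⟨k, hk, hk'⟩
      rcases (E _ _).1 hk' with ⟨rfl, rfl⟩ | ⟨rfl, rfl⟩ | ⟨-, -, h⟩
      · exact ⟨r₁, by grind, l1⟩
      · exact ⟨r₂, by grind, l2⟩
      · exact ⟨k, hk, h⟩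
    · rintro ⟨k, hk, hk'⟩
      by_cases k1 : k = r₁
      · subst k1
        obtain rfl := R1 j hk'
        exact ⟨r₂, by grind, m1⟩
      by_cases k2 : k = r₂
      · subst k2
        obtain rfl := R2 j hk'
        exact ⟨r₁, by grind, m2⟩
      exact ⟨k, hk, (E _ _).2 (Or.inr (Or.inr ⟨k1, k2, hk'⟩))⟩
  have Row1 : ∀ j, Dotted D' r₁ j → j = c₂ := by
    intro j hj
    have := (E _ _).1 hj
    grind
  have Row2 : ∀ j, Dotted D' r₂ j → j = c₁ := by
    intro j hj
    have := (E _ _).1 hj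
    grind
  have Col1 : ∀ i, Dotted D' i c₁ → i ≤ r₂ := by
    intro j hj
    have := (E _ _).1 hj
    have := C1 j
    grind
  have Col2 : ∀ i, Dotted D' i c₂ → i ≤ r₁ := by
    intro j hj
    have := (E _ _).1 hj
    have := C2 j
    grind
  refine ⟨?_, ?_, ?_, ?_, ?_⟩
  · intro i j hi hj
    refine (E _ _).2 (Or.inr (Or.inr ⟨?_, ?_, hroot i j hi hj⟩))
    · rintro rfl
      have : (q₁ : ℕ) < i := h11
      omega
    · rintro rfl
      have : (q₁ : ℕ) < i := h12
      omega
  · intro i j hd h0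
    rcases (E _ _).1 hd with ⟨rfl, rfl⟩ | ⟨rfl, rfl⟩ | ⟨hi1, hi2, h⟩
    · refine Or.inl ⟨⟨q₁, h12, e1⟩, ?_⟩
      rintro ⟨k, hk, hk'⟩
      exact hk.ne (Row2 k hk')
    · refine Or.inl ⟨⟨q₂, h21, e2⟩, ?_⟩
      rintro ⟨k, hk, hk'⟩
      exact hk.ne (Row1 k hk')
    · rw [L i j hi1 hi2, A i j hi1 hi2 h]
      exact hna i j h h0
  · intro i
    by_cases k1 : i = r₁
    · exact ⟨c₂, k1 ▸ m2⟩
    by_cases k2 : i = r₂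
    · exact ⟨c₁, k2 ▸ m1⟩
    obtain ⟨j, hj⟩ := hrow i
    exact ⟨j, (E _ _).2 (Or.inr (Or.inr ⟨k1, k2, hj⟩))⟩
  · intro j
    obtain ⟨i, hi⟩ := hcol j
    by_cases k1 : i = r₁
    · subst k1
      obtain rfl := R1 j hi
      exact ⟨r₂, m1⟩
    by_cases k2 : i = r₂
    · subst k2
      obtain rfl := R2 j hi
      exact ⟨r₁, m2⟩
    exact ⟨i, (E _ _).2 (Or.inr (Or.inr ⟨k1, k2, hi⟩))⟩
  · intro i j hd
    rcases (E _ _).1 hd with ⟨rfl, rfl⟩ | ⟨rfl, rfl⟩ | ⟨hi1, hi2, h⟩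
    · refine Or.inr ⟨?_, ?_⟩
      · rintro ⟨k, hk, hk'⟩
        exact absurd (Col1 k hk') (not_le.2 hk)
      · rintro ⟨k, hk, hk'⟩
        exact hk.ne' (Row2 k hk')
    · refine Or.inr ⟨?_, ?_⟩
      · rintro ⟨k, hk, hk'⟩
        exact absurd (Col2 k hk') (not_le.2 hk)
      · rintro ⟨k, hk, hk'⟩
        exact hk.ne' (Row1 k hk')
    · rw [B i j hi1 hi2 h, R i j hi1 hi2]
      exact hcomp i j h

/-- The transpose of a CNAT is a CNAT. -/
theorem transpose_cnat {n : ℕ} (D : Grid n) (hD : IsCNAT D) :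
    IsCNAT (fun i j => D j i : Grid n) := by
  obtain ⟨hroot, hna, hrow, hcol, hcomp⟩ := hD
  refine ⟨fun i j hi hj => hroot j i hj hi, fun i j hd h0 => ?_, hcol, hrow,
    fun i j hd => ?_⟩
  · exact (hna j i hd (fun h => h0 ⟨h.2, h.1⟩)).symm
  · exact (hcomp j i hd).imp And.symm And.symm

/-- Let `T` be a CNAT of size `n` and let `l₁`, `l₂` be two
interacting leaves of `T`. Then the filling `S(T, l₁, l₂)` obtained by
switching `l₁` and `l₂` is again a CNAT of size `n`. -/
theorem cnat_switch_is_cnat (n : ℕ) (D : Grid n) (hD : IsCNAT D)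
    (l₁ l₂ : Fin n × Fin n) (h : Interacting D l₁ l₂) :
    IsCNAT (switchLeaves D l₁ l₂) := by
  rcases h with ⟨⟨f1, -⟩, ⟨f2, -⟩, p₁, p₂, ⟨a1, a2, a3, a4⟩, ⟨b1, b2, b3, b4⟩, h⟩ |
    ⟨⟨f1, -⟩, ⟨f2, -⟩, p₁, p₂, ⟨a1, a2, a3, a4, -⟩, ⟨b1, b2, b3, b4, -⟩, h⟩
  · rw [a1] at a3
    rw [b1] at b3
    rcases h with ⟨h, h'⟩ | ⟨h, h'⟩
    · exact core D hD l₁.1 l₁.2 l₂.1 l₂.2 p₁.1 p₂.1 f1 f2 h'.ne' a3 b3 a2 h (b2.trans h') b2 a4 b4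
    · exact core D hD l₁.1 l₁.2 l₂.1 l₂.2 p₁.1 p₂.1 f1 f2 h'.ne a3 b3 a2 (a2.trans h') h b2 a4 b4
  · rw [a1] at a3
    rw [b1] at b3
    have key : IsCNAT (switchLeaves (fun i j => D j i : Grid n) (l₁.2, l₁.1) (l₂.2, l₂.1)) := by
      have g1 : IsLeaf (fun i j => D j i : Grid n) l₁.2 l₁.1 := ⟨f1.1, f1.2.2, f1.2.1⟩
      have g2 : IsLeaf (fun i j => D j i : Grid n) l₂.2 l₂.1 := ⟨f2.1, f2.2.2, f2.2.1⟩
      have hT := transpose_cnat D hD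
      rcases h with ⟨h, h'⟩ | ⟨h, h'⟩
      · exact core _ hT l₁.2 l₁.1 l₂.2 l₂.1 p₁.2 p₂.2 g1 g2 h'.ne' a3 b3 a2 h (b2.trans h') b2 a4 b4
      · exact core _ hT l₁.2 l₁.1 l₂.2 l₂.1 p₁.2 p₂.2 g1 g2 h'.ne a3 b3 a2 (a2.trans h') h b2 a4 b4
    have := transpose_cnat _ key
    convert this using 1
    funext i j
    unfold switchLeaves
    grind

end CNATf
end

section
/- Let T be a CNAT, let l_1 and l_2 be two interacting leaves of T, and let T' = S(T,l_1,l_2) be the CNAT obtained by switching them. Then the associated permutation π(T') differs from π(T) by composition with a transposition; in particular sgn π(T') = − sgn π(T). -/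
/-!
Formalization of complete non-ambiguous trees (CNATs).

A CNAT of size `n` is modelled as a Boolean filling `D : Fin n → Fin n → Bool`
of the `n × n` grid (`D i j = true` meaning that cell in row `i`, column `j`
is dotted; rows are numbered from the top, columns from the left, `0`-based),
satisfying the root, non-ambiguity, minimality and completeness conditions.
-/

namespace CNATf

/-- A row contains at most one leaf. -/
theorem leaf_unique {n : ℕ} {D : Grid n} {i j k : Fin n}
    (hj : IsLeaf D i j) (hk : IsLeaf D i k) : j = k := by
  rcases lt_trichotomy j k with h | h | h
  · exact absurd ⟨k, h, hk.1⟩ hj.2.2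
  · exact h
  · exact absurd ⟨j, h, hj.1⟩ hk.2.2

/-- Let `T` be a CNAT, `l₁` and `l₂` two interacting leaves
of `T`, and `T' = S(T, l₁, l₂)`. Then `π(T')` differs from `π(T)` by
composition with a transposition; in particular `sgn π(T') = - sgn π(T)`. -/
theorem cnat_switch_sign (n : ℕ) (D : Grid n) (hD : IsCNAT D)
    (l₁ l₂ : Fin n × Fin n) (h : Interacting D l₁ l₂)
    (π π' : Equiv.Perm (Fin n)) (hπ : IsAssocPerm D π)
    (hπ' : IsAssocPerm (switchLeaves D l₁ l₂) π') :
    (∃ a b : Fin n, a ≠ b ∧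
        (π' = π * Equiv.swap a b ∨ π' = Equiv.swap a b * π)) ∧
    Equiv.Perm.sign π' = - Equiv.Perm.sign π := by
  have hl : IsLeaf D l₁.1 l₁.2 ∧ IsLeaf D l₂.1 l₂.2 := by
    rcases h with h | h
    · exact ⟨h.1.1, h.2.1.1⟩
    · exact ⟨h.1.1, h.2.1.1⟩
  have e1 : π l₁.1 = l₁.2 := leaf_unique (hπ _) hl.1
  have e2 : π l₂.1 = l₂.2 := leaf_unique (hπ _) hl.2
  have hr : l₁.1 ≠ l₂.1 := by
    intro hr
    have hc : l₁.2 = l₂.2 := by rw [← e1, ← e2, hr]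
    rcases h with ⟨_, _, p₁, p₂, _, _, h⟩ | ⟨_, _, p₁, p₂, _, _, h⟩
    · rw [hr] at h
      rcases h with h | h <;> exact lt_irrefl _ h.2
    · rw [hc] at h
      rcases h with h | h <;> exact lt_irrefl _ h.2
  have hc : l₁.2 ≠ l₂.2 := by
    rw [← e1, ← e2]
    exact fun hh => hr (π.injective hh)
  have hoff : ∀ i, i ≠ l₁.1 → i ≠ l₂.1 → π' i = π i := by
    intro i h1 h2
    have hrow : ∀ j, switchLeaves D l₁ l₂ i j = D i j := by
      intro j
      simp [switchLeaves, h1, h2]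
    obtain ⟨ha, _, hb⟩ := hπ' i
    obtain ⟨ha', _, hb'⟩ := hπ i
    simp only [HasDotRight, Dotted, hrow] at ha hb ha' hb'
    rcases lt_trichotomy (π' i) (π i) with h | h | h
    · exact absurd ⟨_, h, ha'⟩ hb
    · exact h
    · exact absurd ⟨_, h, ha⟩ hb'
  have n1 : π' l₁.1 ≠ l₁.2 := by
    intro hh
    have := (hπ' l₁.1).1
    rw [hh] at this
    simp [Dotted, switchLeaves, hr, hc] at this
  have n2 : π' l₂.1 ≠ l₂.2 := by
    intro hh
    have := (hπ' l₂.1).1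
    rw [hh] at this
    simp [Dotted, switchLeaves, hr.symm, hc.symm] at this
  have key : ∀ i, (i = l₁.1 ∨ i = l₂.1) → π' i = l₁.2 ∨ π' i = l₂.2 := by
    intro i hi
    by_contra hcon
    push Not at hcon
    have hk : π (π.symm (π' i)) = π' i := π.apply_symm_apply _
    have k1 : π.symm (π' i) ≠ l₁.1 := by
      intro hh; rw [hh, e1] at hk; exact hcon.1 hk.symm
    have k2 : π.symm (π' i) ≠ l₂.1 := by
      intro hh; rw [hh, e2] at hk; exact hcon.2 hk.symm
    have h3 := hoff _ k1 k2
    rw [hk] at h3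
    have h4 := π'.injective h3
    rw [h4] at k1 k2
    exact hi.elim k1 k2
  have main : π' = π * Equiv.swap l₁.1 l₂.1 := by
    ext1 i
    rw [Equiv.Perm.mul_apply]
    by_cases h1 : i = l₁.1
    · rw [h1, Equiv.swap_apply_left, e2]
      exact (key _ (Or.inl rfl)).resolve_left n1
    · by_cases h2 : i = l₂.1
      · rw [h2, Equiv.swap_apply_right, e1]
        exact (key _ (Or.inr rfl)).resolve_right n2
      · rw [Equiv.swap_apply_of_ne_of_ne h1 h2]
        exact hoff i h1 h2
  refine ⟨⟨l₁.1, l₂.1, hr, Or.inl main⟩, ?_⟩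
  rw [main, Equiv.Perm.sign_mul, Equiv.Perm.sign_swap hr, mul_neg, mul_one]

end CNATf
end

section
/- Let T be a CNAT which has an internal dot whose two children are a leaf and an internal dot. Then T has at least two interacting leaves, i.e. there exist two distinct leaves of T which are interacting. -/
/-!
Formalization of complete non-ambiguous trees (CNATs).

A CNAT of size `n` is modelled as a Boolean filling `D : Fin n → Fin n → Bool`
of the `n × n` grid (`D i j = true` meaning that cell in row `i`, column `j`
is dotted; rows are numbered from the top, columns from the left, `0`-based),
satisfying the root, non-ambiguity, minimality and completeness conditions.
-/

namespace CNATf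

theorem exists_nearest {n : ℕ} (P : Fin n → Prop) (a : Fin n) (h : ∃ k, a < k ∧ P k) :
    ∃ k, a < k ∧ P k ∧ ∀ m, a < m → m < k → ¬ P m := by
  obtain ⟨k, hk, hm⟩ := (wellFounded_lt (α := Fin n)).has_min {k | a < k ∧ P k} h
  exact ⟨k, hk.1, hk.2, fun m h1 h2 h3 => hm m ⟨h1, h3⟩ h2⟩

theorem exists_last {n : ℕ} (P : Fin n → Prop) (h : ∃ k, P k) :
    ∃ k, P k ∧ ∀ m, k < m → ¬ P m := by
  obtain ⟨k, hk, hm⟩ := (wellFounded_gt (α := Fin n)).has_min {k | P k} h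
  exact ⟨k, hk, fun m h1 h2 => hm m h2 h1⟩

theorem leaf_or_internal {n : ℕ} {D : Grid n} (hD : IsCNAT D) {i j : Fin n}
    (h : Dotted D i j) : IsLeaf D i j ∨ IsInternal D i j := by
  rcases hD.2.2.2.2 i j h with h1 | h1
  · exact Or.inr ⟨h, h1⟩
  · exact Or.inl ⟨h, h1⟩

theorem not_above {n : ℕ} {D : Grid n} (hD : IsCNAT D) {i j j' : Fin n}
    (h : Dotted D i j) (hj : j' < j) (h' : Dotted D i j') : ¬ HasDotAbove D i j := by
  have hj0 : (j' : ℕ) < j := hj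
  have hx := hD.2.1 i j h (by omega)
  have hl : HasDotLeft D i j := ⟨j', hj, h'⟩
  rcases hx with hx | hx
  · exact absurd hl hx.2
  · exact hx.2

/-- A dot whose left child is a leaf and whose right child is internal. -/
def TypeA {n : ℕ} (D : Grid n) (i j : Fin n) : Prop :=
  Dotted D i j ∧ (∃ r, IsLeftChild D (i, j) (r, j) ∧ IsLeaf D r j) ∧
    ∃ c, IsRightChild D (i, j) (i, c) ∧ IsInternal D i c

/-- A dot whose left child is internal and whose right child is a leaf. -/
def TypeB {n : ℕ} (D : Grid n) (i j : Fin n) : Prop :=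
  Dotted D i j ∧ (∃ r, IsLeftChild D (i, j) (r, j) ∧ IsInternal D r j) ∧
    ∃ c, IsRightChild D (i, j) (i, c) ∧ IsLeaf D i c

theorem parentAbove_of {n : ℕ} {D : Grid n} {i j r : Fin n} (h : Dotted D i j)
    (hc : IsLeftChild D (i, j) (r, j)) : ParentAbove D (i, j) (r, j) :=
  ⟨rfl, hc.2.1, h, hc.2.2.2⟩

theorem parentLeft_of {n : ℕ} {D : Grid n} (hD : IsCNAT D) {i j c : Fin n} (h : Dotted D i j)
    (hc : IsRightChild D (i, j) (i, c)) : ParentLeft D (i, j) (i, c) :=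
  ⟨rfl, hc.2.1, h, hc.2.2.2, not_above hD hc.2.2.1 hc.2.1 h⟩

/-- Two left leaves with parents in the same row interact. -/
theorem same_row {n : ℕ} {D : Grid n} {i j j' r r' : Fin n} (hjj : j < j')
    (h : Dotted D i j) (h' : Dotted D i j')
    (hr : IsLeftChild D (i, j) (r, j)) (hr' : IsLeftChild D (i, j') (r', j'))
    (hl : IsLeaf D r j) (hl' : IsLeaf D r' j') :
    ∃ l₁ l₂ : Fin n × Fin n, l₁ ≠ l₂ ∧ Interacting D l₁ l₂ := by
  have hne : r ≠ r' := by
    rintro rfl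
    exact hl.2.2 ⟨j', hjj, hl'.1⟩
  refine ⟨(r, j), (r', j'), fun he => hne (congrArg Prod.fst he), Or.inl ?_⟩
  have hp := parentAbove_of h hr
  have hp' := parentAbove_of h' hr'
  refine ⟨⟨hl, _, hp⟩, ⟨hl', _, hp'⟩, _, _, hp, hp', ?_⟩
  rcases lt_or_gt_of_ne hne with hlt | hlt
  · exact Or.inr ⟨hr.2.1, hlt⟩
  · exact Or.inl ⟨hr'.2.1, hlt⟩

/-- Two right leaves with parents in the same column interact. -/
theorem same_col {n : ℕ} {D : Grid n} (hD : IsCNAT D) {i i' j c c' : Fin n} (hii : i < i')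
    (h : Dotted D i j) (h' : Dotted D i' j)
    (hr : IsRightChild D (i, j) (i, c)) (hr' : IsRightChild D (i', j) (i', c'))
    (hl : IsLeaf D i c) (hl' : IsLeaf D i' c') :
    ∃ l₁ l₂ : Fin n × Fin n, l₁ ≠ l₂ ∧ Interacting D l₁ l₂ := by
  have hne : c ≠ c' := by
    rintro rfl
    exact hl.2.1 ⟨i', hii, hl'.1⟩
  refine ⟨(i, c), (i', c'), fun he => hne (congrArg Prod.snd he), Or.inr ?_⟩
  have hp := parentLeft_of hD h hr
  have hp' := parentLeft_of hD h' hr'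
  refine ⟨⟨hl, _, hp⟩, ⟨hl', _, hp'⟩, _, _, hp, hp', ?_⟩
  rcases lt_or_gt_of_ne hne with hlt | hlt
  · exact Or.inr ⟨hr.2.1, hlt⟩
  · exact Or.inl ⟨hr'.2.1, hlt⟩

theorem exists_leftChild {n : ℕ} {D : Grid n} {i j : Fin n} (h : IsInternal D i j) :
    ∃ r, IsLeftChild D (i, j) (r, j) := by
  obtain ⟨r, h1, h2, h3⟩ := exists_nearest (fun k => Dotted D k j) i h.2.1
  exact ⟨r, rfl, h1, h2, h3⟩

theorem exists_rightChild {n : ℕ} {D : Grid n} {i j : Fin n} (h : IsInternal D i j) :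
    ∃ c, IsRightChild D (i, j) (i, c) := by
  obtain ⟨r, h1, h2, h3⟩ := exists_nearest (fun k => Dotted D i k) j h.2.2
  exact ⟨r, rfl, h1, h2, h3⟩

theorem stepA {n : ℕ} {D : Grid n} (hD : IsCNAT D) {i j : Fin n} (h : TypeA D i j) :
    (∃ l₁ l₂ : Fin n × Fin n, l₁ ≠ l₂ ∧ Interacting D l₁ l₂) ∨
      ∃ j', j < j' ∧ TypeB D i j' := by
  obtain ⟨hd, ⟨r, hr, hl⟩, c, hc, hi⟩ := h
  obtain ⟨e, ⟨hje, he⟩, hmax⟩ := exists_last (fun k => j < k ∧ IsInternal D i k) ⟨c, hc.2.1, hi⟩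
  obtain ⟨f, hf⟩ := exists_rightChild he
  have hfl : IsLeaf D i f := (leaf_or_internal hD hf.2.2.1).resolve_right
    fun hfi => hmax f hf.2.1 ⟨lt_trans hje hf.2.1, hfi⟩
  obtain ⟨g, hg⟩ := exists_leftChild he
  rcases leaf_or_internal hD hg.2.2.1 with hgl | hgi
  · exact Or.inl (same_row hje hd he.1 hr hg hl hgl)
  · exact Or.inr ⟨e, hje, he.1, ⟨g, hg, hgi⟩, f, hf, hfl⟩

theorem stepB {n : ℕ} {D : Grid n} (hD : IsCNAT D) {i j : Fin n} (h : TypeB D i j) :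
    (∃ l₁ l₂ : Fin n × Fin n, l₁ ≠ l₂ ∧ Interacting D l₁ l₂) ∨
      ∃ i', i < i' ∧ TypeA D i' j := by
  obtain ⟨hd, ⟨c, hc, hi⟩, r, hr, hl⟩ := h
  obtain ⟨e, ⟨hje, he⟩, hmax⟩ := exists_last (fun k => i < k ∧ IsInternal D k j) ⟨c, hc.2.1, hi⟩
  obtain ⟨f, hf⟩ := exists_leftChild he
  have hfl : IsLeaf D f j := (leaf_or_internal hD hf.2.2.1).resolve_right
    fun hfi => hmax f hf.2.1 ⟨lt_trans hje hf.2.1, hfi⟩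
  obtain ⟨g, hg⟩ := exists_rightChild he
  rcases leaf_or_internal hD hg.2.2.1 with hgl | hgi
  · exact Or.inl (same_col hD hje hd he.1 hr hg hl hgl)
  · exact Or.inr ⟨e, hje, he.1, ⟨f, hf, hfl⟩, g, hg, hgi⟩

theorem descent {n : ℕ} {D : Grid n} (hD : IsCNAT D) : ∀ (N : ℕ) (i j : Fin n),
    2 * n - (i + j : ℕ) ≤ N → (TypeA D i j ∨ TypeB D i j) →
    ∃ l₁ l₂ : Fin n × Fin n, l₁ ≠ l₂ ∧ Interacting D l₁ l₂ := by
  intro N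
  induction N with
  | zero =>
    intro i j hN _
    omega
  | succ N ih =>
    rintro i j hN (h | h)
    · rcases stepA hD h with h | ⟨j', hj, h⟩
      · exact h
      · have : (j : ℕ) < j' := hj
        exact ih i j' (by omega) (Or.inr h)
    · rcases stepB hD h with h | ⟨i', hi, h⟩
      · exact h
      · have : (i : ℕ) < i' := hi
        exact ih i' j (by omega) (Or.inl h)

/-- Let `T` be a CNAT which has an internal dot whose two
children are a leaf and an internal dot. Then `T` has at least two
interacting leaves. -/
theorem cnat_mixed_children_interacting (n : ℕ) (D : Grid n) (hD : IsCNAT D)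
    (h : ∃ d c₁ c₂ : Fin n × Fin n, IsInternal D d.1 d.2 ∧
        IsLeftChild D d c₁ ∧ IsRightChild D d c₂ ∧
        ((IsLeaf D c₁.1 c₁.2 ∧ IsInternal D c₂.1 c₂.2) ∨
         (IsInternal D c₁.1 c₁.2 ∧ IsLeaf D c₂.1 c₂.2))) :
    ∃ l₁ l₂ : Fin n × Fin n, l₁ ≠ l₂ ∧ Interacting D l₁ l₂ := by
  obtain ⟨⟨i, j⟩, ⟨r, c⟩, ⟨r', c'⟩, hd, h1, h2, h3⟩ := h
  obtain rfl : c = j := h1.1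
  obtain rfl : r' = i := h2.1
  refine descent hD _ r' c le_rfl ?_
  rcases h3 with h3 | h3
  · exact Or.inl ⟨hd.1, ⟨r, h1, h3.1⟩, c', h2, h3.2⟩
  · exact Or.inr ⟨hd.1, ⟨r, h1, h3.1⟩, c', h2, h3.2⟩

end CNATf
end

section
/- Let p ≥ 1 and let σ' be a permutation of {1,…,p}. Define σ : {1,…,2p} → {1,…,2p} by σ(2i−1) = 2σ'(i) and σ(2i) = 2σ'(i) − 1 for 1 ≤ i ≤ p. Then σ is a permutation of {1,…,2p}, its number of inversions satisfies inv(σ) = 4·inv(σ') + p, and consequently sgn(σ) = (−1)^p. -/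
/-!
Formalization of complete non-ambiguous trees (CNATs).

A CNAT of size `n` is modelled as a Boolean filling `D : Fin n → Fin n → Bool`
of the `n × n` grid (`D i j = true` meaning that cell in row `i`, column `j`
is dotted; rows are numbered from the top, columns from the left, `0`-based),
satisfying the root, non-ambiguity, minimality and completeness conditions.
-/

namespace CNATf

/-- The pairing `(i, b) ↦ 2 i + b`. -/
def dblEquiv (p : ℕ) : Fin p × Bool ≃ Fin (2 * p) where
  toFun x := ⟨2 * (x.1 : ℕ) + x.2.toNat, by
    have := x.1.2
    have := Bool.toNat_le x.2
    omega⟩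
  invFun y := (⟨(y : ℕ) / 2, by have := y.2; omega⟩, decide ((y : ℕ) % 2 = 1))
  left_inv := by
    rintro ⟨i, b⟩
    cases b <;> ext <;> simp <;> omega
  right_inv := by
    intro y
    ext
    by_cases h : (y : ℕ) % 2 = 1 <;> simp [h] <;> omega

theorem dblEquiv_val (p : ℕ) (i : Fin p) (b : Bool) :
    ((dblEquiv p (i, b) : Fin (2 * p)) : ℕ) = 2 * (i : ℕ) + b.toNat := rfl

/-- Let `p ≥ 1` and `σ'` a permutation of `{1, …, p}`.
Define `σ : {1, …, 2p} → {1, …, 2p}` by `σ(2i - 1) = 2σ'(i)` and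
`σ(2i) = 2σ'(i) - 1` (written here `0`-based: `σ(2i) = 2σ'(i) + 1` and
`σ(2i + 1) = 2σ'(i)`). Then `σ` is a permutation of `{1, …, 2p}`, its number
of inversions satisfies `inv σ = 4 inv σ' + p`, and `sgn σ = (-1)^p`. -/
theorem doubled_perm_inversions (p : ℕ) (hp : 1 ≤ p) (σ' : Equiv.Perm (Fin p))
    (σ : Fin (2 * p) → Fin (2 * p))
    (hσ : ∀ i : Fin p,
      σ ⟨2 * (i : ℕ), by have := i.2; omega⟩
          = ⟨2 * ((σ' i : ℕ)) + 1, by have := (σ' i).2; omega⟩ ∧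
      σ ⟨2 * (i : ℕ) + 1, by have := i.2; omega⟩
          = ⟨2 * ((σ' i : ℕ)), by have := (σ' i).2; omega⟩) :
    Function.Bijective σ ∧
    Nat.card {q : Fin (2 * p) × Fin (2 * p) // q.1 < q.2 ∧ σ q.2 < σ q.1}
      = 4 * Nat.card {q : Fin p × Fin p // q.1 < q.2 ∧ σ' q.2 < σ' q.1} + p ∧
    ∀ e : Equiv.Perm (Fin (2 * p)), (∀ x : Fin (2 * p), e x = σ x) →
      Equiv.Perm.sign e = (-1) ^ p := by
  have key : ∀ (i : Fin p) (b : Bool),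
      σ (dblEquiv p (i, b)) = dblEquiv p (σ' i, !b) := by
    intro i b
    cases b
    · exact (hσ i).1
    · exact (hσ i).2
  let P : Equiv.Perm (Fin p × Bool) :=
    (Equiv.prodCongrLeft fun _ : Bool => σ') *
      (Equiv.prodCongrRight fun _ : Fin p => Equiv.swap false true)
  have hP : ∀ i b, P (i, b) = (σ' i, !b) := by
    intro i b
    cases b <;> simp [P]
  have hσP : ∀ x, σ x = (dblEquiv p).permCongr P x := by
    intro x
    obtain ⟨⟨i, b⟩, rfl⟩ := (dblEquiv p).surjective x
    rw [key, Equiv.permCongr_apply, Equiv.symm_apply_apply, hP]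
  have hval : ∀ (i : Fin p) (b : Bool),
      ((σ (dblEquiv p (i, b)) : Fin (2 * p)) : ℕ) = 2 * (σ' i : ℕ) + (!b).toNat := by
    intro i b
    rw [key, dblEquiv_val]
  refine ⟨?_, ?_, ?_⟩
  · rw [funext hσP]
    exact Equiv.bijective _
  · let A := {q : Fin p × Fin p // q.1 < q.2 ∧ σ' q.2 < σ' q.1}
    let B := {q : Fin (2 * p) × Fin (2 * p) // q.1 < q.2 ∧ σ q.2 < σ q.1}
    let F : (A × (Bool × Bool)) ⊕ Fin p → B := fun z => match z with
      | Sum.inl (q, (a, b)) => ⟨(dblEquiv p (q.1.1, a), dblEquiv p (q.1.2, b)), by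
          have h := q.2
          simp only [Fin.lt_def, hval, dblEquiv_val] at h ⊢
          have := Bool.toNat_le a
          have := Bool.toNat_le b
          have := Bool.toNat_le (!a)
          have := Bool.toNat_le (!b)
          omega⟩
      | Sum.inr i => ⟨(dblEquiv p (i, false), dblEquiv p (i, true)), by
          simp [Fin.lt_def, hval, dblEquiv_val]⟩
    have hF : Function.Bijective F := by
      constructor
      · rintro (⟨⟨⟨i, j⟩, h⟩, a, b⟩ | i) (⟨⟨⟨i', j'⟩, h'⟩, a', b'⟩ | i') heq
        · replace heq := congrArg Subtype.val heq
          simp only [F, Prod.mk.injEq, EmbeddingLike.apply_eq_iff_eq] at heq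
          obtain ⟨⟨rfl, rfl⟩, rfl, rfl⟩ := heq
          rfl
        · replace heq := congrArg Subtype.val heq
          simp only [F, Prod.mk.injEq, EmbeddingLike.apply_eq_iff_eq] at heq
          obtain ⟨⟨hi, -⟩, hj, -⟩ := heq
          exact absurd h.1 (by simp [hi, hj])
        · replace heq := congrArg Subtype.val heq
          simp only [F, Prod.mk.injEq, EmbeddingLike.apply_eq_iff_eq] at heq
          obtain ⟨⟨hi, -⟩, hj, -⟩ := heq
          exact absurd h'.1 (by simp [← hi, ← hj])
        · replace heq := congrArg Subtype.val heq
          simp only [F, Prod.mk.injEq, EmbeddingLike.apply_eq_iff_eq] at heq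
          rw [heq.1.1]
      · rintro ⟨⟨x, y⟩, h⟩
        obtain ⟨⟨i, a⟩, rfl⟩ := (dblEquiv p).surjective x
        obtain ⟨⟨j, b⟩, rfl⟩ := (dblEquiv p).surjective y
        have h0 := h
        simp only [Fin.lt_def, hval, dblEquiv_val] at h0
        by_cases hij : i = j
        · subst hij
          cases a <;> cases b <;> simp at h0
          exact ⟨Sum.inr i, rfl⟩
        · have hs : (σ' i : ℕ) ≠ (σ' j : ℕ) := fun e => hij (σ'.injective (Fin.ext e))
          have hi : (i : ℕ) ≠ (j : ℕ) := fun e => hij (Fin.ext e)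
          have := Bool.toNat_le a
          have := Bool.toNat_le b
          have := Bool.toNat_le (!a)
          have := Bool.toNat_le (!b)
          refine ⟨Sum.inl (⟨(i, j), ?_⟩, (a, b)), rfl⟩
          simp only [Fin.lt_def]
          omega
    have hc : Nat.card ((A × (Bool × Bool)) ⊕ Fin p) = Nat.card B :=
      Nat.card_congr (Equiv.ofBijective F hF)
    rw [Nat.card_sum, Nat.card_prod, Nat.card_prod] at hc
    simp only [Nat.card_eq_fintype_card (α := Bool), Fintype.card_bool, Nat.card_fin] at hc
    change Nat.card B = 4 * Nat.card A + p
    omega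
  · intro e he
    have : e = (dblEquiv p).permCongr P := Equiv.ext fun x => (he x).trans (hσP x)
    rw [this, Equiv.Perm.sign_permCongr, Equiv.Perm.sign_mul, Equiv.Perm.sign_prodCongrLeft,
      Equiv.Perm.sign_prodCongrRight]
    simp [Equiv.Perm.sign_swap]

end CNATf
end
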